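/- Let m ∈ ℝ, σ > 0, and ε ∈ (0,1), and let ι_ε be the unique real number with erf(ι_ε) = 2ε − 1. Then (1/ε) · ∫_{−∞}^{m + √2·σ·ι_ε} z · (1/(√(2π)·σ)) · exp(−(z − m)²/(2σ²)) dz = m − σ/(√(2π) · ε · exp(ι_ε²)). -/

import Mathlib

/-- The error function `erf(x) = (2/√π) ∫₀ˣ e^{−t²} dt`. -/
noncomputable def erf (x : ℝ) : ℝ :=
  (2 / Real.sqrt Real.pi) * ∫ t in (0 : ℝ)..x, Real.exp (-t ^ 2)

/-!
The substitution `z = m + √2 σ t` turns the left-hand integral into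
`(1/√π) ∫_{t < ι} (m + √2 σ t) e^{-t²} dt`. Its constant part is given by the Gaussian
distribution function, `∫_{t ≤ a} e^{-t²} dt = (√π / 2) (1 + erf a)`, which is `√π ε` at `a = ι`
(`integral_Iic_exp_neg_sq`); its linear part has the explicit antiderivative `-e^{-t²} / 2`
(`integral_Iic_mul_exp_neg_sq`).
-/

open MeasureTheory Filter Topology

theorem integrable_exp_neg_sq : Integrable (fun t : ℝ => Real.exp (-t ^ 2)) := by
  simpa using integrable_exp_neg_mul_sq (b := 1) one_pos

theorem integrable_mul_exp_neg_sq : Integrable (fun t : ℝ => t * Real.exp (-t ^ 2)) := by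
  simpa using integrable_mul_exp_neg_mul_sq (b := 1) one_pos

theorem integral_Iic_exp_neg_sq (a : ℝ) :
    ∫ t in Set.Iic a, Real.exp (-t ^ 2) = Real.sqrt Real.pi / 2 * (1 + erf a) := by
  have h0 : ∫ t in Set.Iic (0 : ℝ), Real.exp (-t ^ 2) = Real.sqrt Real.pi / 2 := by
    have h := integral_comp_neg_Iic (0 : ℝ) (fun t : ℝ => Real.exp (-t ^ 2))
    have h' := integral_gaussian_Ioi 1
    simp only [neg_sq, neg_zero] at h
    simp only [neg_mul, one_mul, div_one] at h'
    rw [h, h']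
  have h1 := intervalIntegral.integral_Iic_sub_Iic (a := 0) (b := a)
    integrable_exp_neg_sq.integrableOn integrable_exp_neg_sq.integrableOn
  have hpi : Real.sqrt Real.pi ≠ 0 := (Real.sqrt_pos.mpr Real.pi_pos).ne'
  rw [erf, ← h1, h0]
  field_simp
  ring

theorem integral_Iic_mul_exp_neg_sq (a : ℝ) :
    ∫ t in Set.Iic a, t * Real.exp (-t ^ 2) = -Real.exp (-a ^ 2) / 2 := by
  have hd : ∀ t ∈ Set.Iic a,
      HasDerivAt (fun t : ℝ => -Real.exp (-t ^ 2) / 2) (t * Real.exp (-t ^ 2)) t := by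
    intro t _
    convert! (((hasDerivAt_pow 2 t).neg).exp.neg).div_const 2 using 1
    simp
    ring
  have hsq : Tendsto (fun t : ℝ => t ^ 2) atBot atTop := by
    simpa [Function.comp_def] using
      (tendsto_pow_atTop (two_ne_zero : (2 : ℕ) ≠ 0)).comp (tendsto_neg_atBot_atTop (G := ℝ))
  have ht : Tendsto (fun t : ℝ => -Real.exp (-t ^ 2) / 2) atBot (𝓝 0) := by
    simpa using ((Real.tendsto_exp_neg_atTop_nhds_zero.comp hsq).neg).div_const 2
  rw [integral_Iic_of_hasDerivAt_of_tendsto' hd integrable_mul_exp_neg_sq.integrableOn ht, sub_zero]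

theorem integral_Iio_comp_affine (f : ℝ → ℝ) (m a : ℝ) {c : ℝ} (hc : 0 < c) :
    ∫ z in Set.Iio (m + c * a), f z = c * ∫ t in Set.Iio a, f (m + c * t) := by
  rw [← integral_indicator measurableSet_Iio, ← integral_indicator measurableSet_Iio]
  have h1 : (Set.Iio a).indicator (fun t => f (m + c * t)) =
      fun t => (fun y => (Set.Iio (m + c * a)).indicator f (m + y)) (c * t) := by
    funext t
    simp [Set.indicator, hc]
  rw [h1, Measure.integral_comp_mul_left (fun y => (Set.Iio (m + c * a)).indicator f (m + y)) c,
    integral_add_left_eq_self, abs_of_pos (inv_pos.mpr hc), smul_eq_mul]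
  field_simp

theorem gaussian_tail_first_moment (m σ ε : ℝ) (hσ : 0 < σ)
    (hε : ε ∈ Set.Ioo (0 : ℝ) 1) (ι : ℝ) (hι : erf ι = 2 * ε - 1) :
    (1 / ε) * ∫ z in Set.Iio (m + Real.sqrt 2 * σ * ι),
        z * ((1 / (Real.sqrt (2 * Real.pi) * σ)) *
          Real.exp (-(z - m) ^ 2 / (2 * σ ^ 2))) =
      m - σ / (Real.sqrt (2 * Real.pi) * ε * Real.exp (ι ^ 2)) := by
  have hε0 : ε ≠ 0 := hε.1.ne'
  have h2 : Real.sqrt 2 ^ 2 = 2 := Real.sq_sqrt (by norm_num)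
  have hs2 : 0 < Real.sqrt 2 := by positivity
  have hspi : 0 < Real.sqrt Real.pi := Real.sqrt_pos.mpr Real.pi_pos
  have hexp := Real.exp_pos (ι ^ 2)
  rw [integral_Iio_comp_affine _ m ι (by positivity : 0 < Real.sqrt 2 * σ),
    Real.sqrt_mul (by norm_num : (0 : ℝ) ≤ 2)]
  have hint : ∀ t : ℝ, (m + Real.sqrt 2 * σ * t) * ((1 / (Real.sqrt 2 * Real.sqrt Real.pi * σ)) *
        Real.exp (-(m + Real.sqrt 2 * σ * t - m) ^ 2 / (2 * σ ^ 2))) =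
      m / (Real.sqrt 2 * Real.sqrt Real.pi * σ) * Real.exp (-t ^ 2) +
        1 / Real.sqrt Real.pi * (t * Real.exp (-t ^ 2)) := by
    intro t
    have he : -(m + Real.sqrt 2 * σ * t - m) ^ 2 / (2 * σ ^ 2) = -t ^ 2 := by
      rw [add_sub_cancel_left, mul_pow, mul_pow, h2]
      field_simp
    rw [he]
    field_simp
  simp only [hint]
  rw [← integral_Iic_eq_integral_Iio,
    integral_add (integrable_exp_neg_sq.integrableOn.const_mul _)
      (integrable_mul_exp_neg_sq.integrableOn.const_mul _),
    integral_const_mul, integral_const_mul, integral_Iic_exp_neg_sq,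
    integral_Iic_mul_exp_neg_sq, hι, Real.exp_neg]
  field_simp
  linear_combination (-σ) * h2
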